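/- There exists a set X ⊆ ω^ω such that X belongs to the tree ideal s₀ but X does not belong to the tree ideal cl₀. -/

import Mathlib

open Cardinal Set

/-- A tree on ω: a nonempty set of finite sequences closed under initial segments. -/
def IsTree (T : Set (List ℕ)) : Prop :=
  T.Nonempty ∧ ∀ s ∈ T, ∀ n : ℕ, s.take n ∈ T

/-- The body of a tree: all infinite branches. -/
def treeBody (T : Set (List ℕ)) : Set (ℕ → ℕ) :=
  {x | ∀ n : ℕ, (List.ofFn fun i : Fin n => x i) ∈ T}

/-- Immediate successors of a node in a tree. -/
def succs (T : Set (List ℕ)) (t : List ℕ) : Set ℕ := {n | t ++ [n] ∈ T}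

/-- Sacks (perfect) tree: every node has an extension with at least two immediate successors. -/
def IsSacksTree (T : Set (List ℕ)) : Prop :=
  IsTree T ∧ ∀ s ∈ T, ∃ t ∈ T, s <+: t ∧ (succs T t).Nontrivial

/-- Miller tree: every node has an extension with infinitely many immediate successors. -/
def IsMillerTree (T : Set (List ℕ)) : Prop :=
  IsTree T ∧ ∀ s ∈ T, ∃ t ∈ T, s <+: t ∧ (succs T t).Infinite

/-- Laver tree: has a stem (a node comparable with every node) such that every node
extending the stem has infinitely many immediate successors. -/
def IsLaverTree (T : Set (List ℕ)) : Prop :=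
  IsTree T ∧ ∃ s ∈ T, (∀ t ∈ T, s <+: t ∨ t <+: s) ∧
    ∀ t ∈ T, s <+: t → (succs T t).Infinite

/-- Complete Laver tree: every node has infinitely many immediate successors. -/
def IsCompleteLaverTree (T : Set (List ℕ)) : Prop :=
  IsTree T ∧ ∀ t ∈ T, (succs T t).Infinite

/-- The tree ideal t₀ associated with a family of trees 𝕋. -/
def treeIdeal (𝕋 : Set (Set (List ℕ))) : Set (Set (ℕ → ℕ)) :=
  {A | ∀ P ∈ 𝕋, ∃ Q ∈ 𝕋, Q ⊆ P ∧ treeBody Q ∩ A = ∅}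

/-- t-measurability with respect to a family of trees 𝕋. -/
def TMeasurable (𝕋 : Set (Set (List ℕ))) (A : Set (ℕ → ℕ)) : Prop :=
  ∀ P ∈ 𝕋, ∃ Q ∈ 𝕋, Q ⊆ P ∧ (treeBody Q ⊆ A ∨ treeBody Q ∩ A = ∅)

/-- 𝕋-Bernstein set: meets and omits the body of every tree in 𝕋. -/
def TBernstein (𝕋 : Set (Set (List ℕ))) (B : Set (ℕ → ℕ)) : Prop :=
  ∀ T ∈ 𝕋, (B ∩ treeBody T).Nonempty ∧ (B \ treeBody T).Nonempty

/-! Take a dominating family `D` of least size. Transfinite recursion along `D` attaches to every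
`d ∈ D` a compact box of `ω^ω` so that the boxes are pairwise disjoint and the sides of the box of
`d` are wide enough for any complete Laver tree whose successors are bounded by `d` to choose, at
each level, between two disjoint intervals. Recording these choices maps the branches of the tree
inside the box onto the Cantor space. Cutting each box along a continuous self-map of the Cantor
space with fibres of size `𝔠` therefore gives pairwise disjoint closed pieces such that every
complete Laver tree has `𝔠` branches in each of `𝔠` pieces.

Let `X` consist of one branch of each complete Laver tree, chosen in distinct pieces and so that
`X` has fewer than `𝔠` points in common with any closed set meeting every piece in a countable
set. Then `X ∉ cl₀`. If a perfect set `P` meets some piece uncountably, this intersection contains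
at most one point of `X`; otherwise `P` contains fewer than `𝔠` points of `X`. In both cases some
member of a family of `𝔠` disjoint uncountable closed subsets of `P` misses `X`, so `X ∈ s₀`. -/

universe u

section Selection

variable {α ι T : Type u} {κ : Cardinal.{u}}

theorem exists_forall_mem_pairwise_or (hT : #T ≤ κ) {S : T → Set α} {Q : T → α → α → Prop}
    (h : ∀ t, ∀ s : Set (T × α), #s < κ → ∃ a ∈ S t, ∀ p ∈ s, Q p.1 p.2 a) :
    ∃ G : T → α, (∀ t, G t ∈ S t) ∧ Pairwise fun t t' ↦ Q t (G t) (G t') ∨ Q t' (G t') (G t) := by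
  obtain ⟨_, _, hord⟩ := exists_ord_eq_type_lt T
  choose g hgS hgQ using h
  have graph_lt (t : T) (u : ∀ t' < t, α) : #(range fun t' : Iio t ↦ (t'.1, u t' t'.2)) < κ :=
    mk_range_le.trans_lt ((mk_Iio_lt t hord).trans_le hT)
  let G : T → α := wellFounded_lt.fix fun t u ↦ g t _ (graph_lt t u)
  have hG (t : T) : G t = g t _ (graph_lt t fun t' _ ↦ G t') := wellFounded_lt.fix_eq _ t
  have hlt {t t' : T} (h : t < t') : Q t (G t) (G t') := by
    rw [hG t']
    exact hgQ t' _ _ (t, G t) ⟨⟨t, h⟩, rfl⟩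
  refine ⟨G, fun t ↦ hG t ▸ hgS t _ _, fun t t' hne ↦ ?_⟩
  exact hne.lt_or_gt.imp hlt hlt

theorem exists_injective_forall_mem_of_le_mk (hT : #T ≤ κ) {S : T → Set α}
    (hS : ∀ t, κ ≤ #(S t)) : ∃ f : T → α, Function.Injective f ∧ ∀ t, f t ∈ S t := by
  obtain ⟨f, hfS, hf⟩ := exists_forall_mem_pairwise_or hT (S := S) (Q := fun _ a b ↦ a ≠ b)
    fun t s hs ↦ by
      obtain ⟨a, haS, ha⟩ := sdiff_nonempty_of_mk_lt_mk <|
        (mk_image_le (f := Prod.snd) (s := s)).trans_lt (hs.trans_le (hS t))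
      exact ⟨a, haS, fun p hp hpa ↦ ha ⟨p, hp, hpa⟩⟩
  refine ⟨f, fun t t' heq ↦ ?_, hfS⟩
  by_contra hne
  exact (hf hne).elim (· heq) (· heq.symm)

theorem exists_isCofinal_pairwise_not_le [Preorder α] (u : α → α → α) :
    ∃ D : Set α, IsCofinal D ∧ ∃ G : D → α,
      Pairwise fun d e : D ↦ ¬ G e ≤ u d (G d) ∨ ¬ G d ≤ u e (G e) := by
  obtain ⟨D, hD, hcard⟩ := Order.exists_cof_eq α
  obtain ⟨G, -, hG⟩ := exists_forall_mem_pairwise_or (T := D) hcard.le (S := fun _ ↦ univ)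
    (Q := fun d a b ↦ ¬ b ≤ u d a) fun _ s hs ↦ by
      have hnot : ¬ IsCofinal ((fun p : D × α ↦ u p.1 p.2) '' s) := fun hcof ↦
        ((Order.cof_le hcof).trans mk_image_le).not_gt hs
      simpa [IsCofinal] using hnot
  exact ⟨D, hD, G, hG⟩

theorem exists_rel_mk_fibers_lt_of_mk_le (hκ : ℵ₀ ≤ κ) (hι : #ι ≤ κ) (hT : #T ≤ κ) :
    ∃ r : ι → T → Prop, (∀ i, #{t | ¬ r i t} < κ) ∧ ∀ t, #{i | r i t} < κ := by
  induction κ using Cardinal.inductionOn with | _ K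
  have : Infinite K := infinite_iff.2 hκ
  obtain ⟨e⟩ := hι
  obtain ⟨f⟩ := hT
  obtain ⟨r, hr, hr'⟩ := exists_rel_mk_fibers_lt K
  refine ⟨fun i t ↦ r (e i) (f t), fun i ↦ ?_, fun t ↦ ?_⟩
  · exact (mk_preimage_of_injective f {k | ¬ r (e i) k} f.injective).trans_lt (hr _)
  · exact (mk_preimage_of_injective e {k | r k (f t)} e.injective).trans_lt (hr' _)

theorem mk_biUnion_lt_of_countable (hκ : ℵ₀ < κ) {s : Set ι} (hs : #s < κ) {A : ι → Set α}
    (hA : ∀ i ∈ s, (A i).Countable) : #(⋃ i ∈ s, A i : Set α) < κ :=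
  calc #(⋃ i ∈ s, A i : Set α)
      ≤ #s * ⨆ i : s, #(A i) := mk_biUnion_le A s
    _ ≤ #s * ℵ₀ := by
      gcongr
      exact ciSup_le' fun i ↦ (hA i i.2).le_aleph0
    _ < κ := mul_lt_of_lt hκ.le hs hκ

theorem exists_forall_inter_nonempty_and_mk_inter_lt (hκ : ℵ₀ < κ) {C : ι → Set α}
    (hC : Pairwise (Function.onFun Disjoint C)) {𝓑 𝓟 : Set (Set α)} (h𝓑 : #𝓑 ≤ κ) (h𝓟 : #𝓟 ≤ κ)
    (hCB : ∀ B ∈ 𝓑, κ ≤ #{i | κ ≤ #(C i ∩ B : Set α)}) :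
    ∃ X : Set α, (∀ B ∈ 𝓑, (X ∩ B).Nonempty) ∧ (∀ i, (X ∩ C i).Subsingleton) ∧
      ∀ P ∈ 𝓟, (∀ i, (C i ∩ P).Countable) → #(X ∩ P : Set α) < κ := by
  obtain ⟨i, hi_inj, hi⟩ := exists_injective_forall_mem_of_le_mk h𝓑 fun B ↦ hCB B B.2
  -- The point chosen for `B` only has to avoid the fewer than `κ` many `P` with `r P B`; still
  -- every `P` is avoided by all but fewer than `κ` of the points.
  obtain ⟨r, hr, hr'⟩ := exists_rel_mk_fibers_lt_of_mk_le hκ.le h𝓟 h𝓑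
  have point (B : 𝓑) : ∃ x ∈ C (i B) ∩ B,
      ∀ P : 𝓟, r P B → (C (i B) ∩ P).Countable → x ∉ P.1 := by
    let s : Set 𝓟 := {P | r P B ∧ (C (i B) ∩ P).Countable}
    have hs : #(⋃ P ∈ s, C (i B) ∩ P : Set α) < κ :=
      mk_biUnion_lt_of_countable hκ ((mk_le_mk_of_subset fun _ h ↦ h.1).trans_lt (hr' B))
        fun _ h ↦ h.2
    obtain ⟨x, hx, hxs⟩ := sdiff_nonempty_of_mk_lt_mk (hs.trans_le (hi B))
    exact ⟨x, hx, fun P hrP hP hxP ↦ hxs (mem_biUnion (x := P) ⟨hrP, hP⟩ ⟨hx.1, hxP⟩)⟩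
  choose x hx hxP using point
  refine ⟨range x, fun B hB ↦ ⟨x ⟨B, hB⟩, mem_range_self _, (hx ⟨B, hB⟩).2⟩, ?_, fun P hP hCP ↦ ?_⟩
  · have index_eq {B : 𝓑} {j : ι} (hj : x B ∈ C j) : i B = j :=
      hC.eq (not_disjoint_iff.2 ⟨x B, (hx B).1, hj⟩)
    rintro j _ ⟨⟨B, rfl⟩, hB⟩ _ ⟨⟨B', rfl⟩, hB'⟩
    rw [hi_inj ((index_eq hB).trans (index_eq hB').symm)]
  · have hsub : range x ∩ P ⊆ x '' {B | ¬ r ⟨P, hP⟩ B} := by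
      rintro _ ⟨⟨B, rfl⟩, hB⟩
      exact ⟨B, fun hrB ↦ hxP B ⟨P, hP⟩ hrB (hCP _) hB, rfl⟩
    exact (mk_le_mk_of_subset hsub).trans_lt (mk_image_le.trans_lt (hr _))

end Selection

section Polish

theorem exists_continuous_forall_continuum_le_mk_fiber :
    ∃ p : (ℕ → Bool) → ℕ → Bool, Continuous p ∧ ∀ ξ, 𝔠 ≤ #(p ⁻¹' {ξ}) := by
  let h := cantorSpaceHomeomorphNatToCantorSpace
  refine ⟨fun z ↦ h z 0, (continuous_apply 0).comp h.continuous, fun ξ ↦ ?_⟩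
  let e (η : ℕ → Bool) : (fun z ↦ h z 0) ⁻¹' {ξ} :=
    ⟨h.symm fun n ↦ if n = 0 then ξ else η, by simp⟩
  have he : Function.Injective e := fun η η' heq ↦ by
    simpa using congrFun (h.symm.injective (Subtype.ext_iff.1 heq)) 1
  simpa using mk_le_of_injective he

variable {α : Type u} [TopologicalSpace α]

theorem mk_setOf_isClosed_le_continuum [SecondCountableTopology α] :
    #{C : Set α | IsClosed C} ≤ 𝔠 := by
  let 𝓤 := TopologicalSpace.countableBasis α
  have hsub : {C : Set α | IsClosed C} ⊆ (fun 𝓥 ↦ (⋃₀ 𝓥)ᶜ) '' 𝒫 𝓤 := fun C hC ↦ by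
    obtain ⟨𝓥, h𝓥, h⟩ :=
      (TopologicalSpace.isBasis_countableBasis α).open_eq_sUnion hC.isOpen_compl
    exact ⟨𝓥, h𝓥, by simp [← h]⟩
  calc #{C : Set α | IsClosed C}
      ≤ #(𝒫 𝓤) := (mk_le_mk_of_subset hsub).trans mk_image_le
    _ = 2 ^ #𝓤 := mk_powerset 𝓤
    _ ≤ 2 ^ ℵ₀ :=
      power_le_power_left two_ne_zero (TopologicalSpace.countable_countableBasis α).le_aleph0
    _ = 𝔠 := two_power_aleph0

variable [PolishSpace α]

theorem exists_isClosed_subset_disjoint_of_mk_inter_lt {P Y : Set α} (hP : IsClosed P)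
    (hPunc : ¬ P.Countable) (hPY : #(P ∩ Y : Set α) < 𝔠) :
    ∃ D ⊆ P, IsClosed D ∧ ¬ D.Countable ∧ Disjoint D Y := by
  obtain ⟨f, hfP, hf, hf_inj⟩ := hP.exists_nat_bool_injection_of_not_countable hPunc
  obtain ⟨p, hp, hp_fiber⟩ := exists_continuous_forall_continuum_le_mk_fiber
  obtain ⟨ξ, hξ⟩ : ∃ ξ, Disjoint (f '' (p ⁻¹' {ξ})) Y := by
    by_contra! hmeet
    have hmem (ξ) : ∃ z, p z = ξ ∧ f z ∈ Y := by
      simpa [not_disjoint_iff] using hmeet ξ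
    choose z hz hzY using hmem
    have hinj : Function.Injective fun ξ ↦ (⟨f (z ξ), hfP ⟨_, rfl⟩, hzY ξ⟩ : ↥(P ∩ Y)) :=
      fun ξ η h ↦ by rw [← hz ξ, ← hz η, hf_inj (Subtype.ext_iff.1 h)]
    have hle := lift_mk_le_lift_mk_of_injective hinj
    have hcantor : #(ℕ → Bool) = 𝔠 := by simp
    rw [hcantor, lift_continuum, lift_uzero] at hle
    exact hPY.not_ge hle
  refine ⟨f '' (p ⁻¹' {ξ}), (image_subset_range _ _).trans hfP,
    ((isClosed_singleton.preimage hp).isCompact.image hf).isClosed, fun hcount ↦ ?_, hξ⟩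
  have hfiber : (p ⁻¹' {ξ}).Countable :=
    countable_of_injective_of_countable_image hf_inj.injOn hcount
  exact (hfiber.le_aleph0.trans_lt aleph0_lt_continuum).not_ge (hp_fiber ξ)

theorem exists_forall_inter_nonempty_and_forall_isClosed {ι : Type u} {C : ι → Set α}
    (hC : ∀ i, IsClosed (C i)) (hdisj : Pairwise (Function.onFun Disjoint C)) {𝓑 : Set (Set α)}
    (h𝓑 : #𝓑 ≤ 𝔠) (hCB : ∀ B ∈ 𝓑, 𝔠 ≤ #{i | 𝔠 ≤ #(C i ∩ B : Set α)}) :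
    ∃ X : Set α, (∀ B ∈ 𝓑, (X ∩ B).Nonempty) ∧ ∀ P, IsClosed P → ¬ P.Countable →
      ∃ D ⊆ P, IsClosed D ∧ ¬ D.Countable ∧ Disjoint D X := by
  obtain ⟨X, hXB, hXC, hXP⟩ := exists_forall_inter_nonempty_and_mk_inter_lt aleph0_lt_continuum
    hdisj h𝓑 mk_setOf_isClosed_le_continuum hCB
  refine ⟨X, hXB, fun P hP hPunc ↦ ?_⟩
  by_cases hsmall : ∀ i, (C i ∩ P).Countable
  · refine exists_isClosed_subset_disjoint_of_mk_inter_lt hP hPunc ?_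
    rw [inter_comm]
    exact hXP P hP hsmall
  · obtain ⟨i, hi⟩ := not_forall.1 hsmall
    have hsub : (C i ∩ P ∩ X).Subsingleton := (hXC i).anti fun _ hx ↦ ⟨hx.2, hx.1.1⟩
    obtain ⟨D, hDP, hD⟩ := exists_isClosed_subset_disjoint_of_mk_inter_lt ((hC i).inter hP) hi
      (hsub.countable.le_aleph0.trans_lt aleph0_lt_continuum)
    exact ⟨D, hDP.trans inter_subset_right, hD⟩

end Polish

section Trees

variable {α : Type u}

/-- The restriction `x ↾ n` of an infinite sequence to its first `n` entries; `treeBody T` consists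
of the sequences all of whose restrictions belong to `T`. -/
def initSeg (x : ℕ → α) (n : ℕ) : List α := List.ofFn fun i : Fin n ↦ x i

@[simp]
theorem length_initSeg (x : ℕ → α) (n : ℕ) : (initSeg x n).length = n := List.length_ofFn

@[simp]
theorem getElem_initSeg (x : ℕ → α) {n m : ℕ} (h : m < (initSeg x n).length) :
    (initSeg x n)[m] = x m := by
  simp [initSeg]

theorem initSeg_succ (x : ℕ → α) (n : ℕ) : initSeg x (n + 1) = initSeg x n ++ [x n] :=
  List.ofFn_succ_last

theorem take_initSeg (x : ℕ → α) (m n : ℕ) : (initSeg x n).take m = initSeg x (min m n) :=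
  List.ext_getElem (by simp) (by simp)

theorem initSeg_eq_initSeg_iff {x y : ℕ → α} {n : ℕ} :
    initSeg x n = initSeg y n ↔ x ∈ PiNat.cylinder y n := by
  simp [initSeg, List.ofFn_inj, funext_iff, Fin.forall_iff]

theorem exists_initSeg_eq_and_forall_mem {A : Set (List α)} (hA : ∀ t ∈ A, ∃ a, t ++ [a] ∈ A)
    {s : List α} (hs : s ∈ A) :
    ∃ x : ℕ → α, initSeg x s.length = s ∧ ∀ n, s.length ≤ n → initSeg x n ∈ A := by
  choose next hnext using hA
  let t (n : ℕ) : A := n.rec ⟨s, hs⟩ fun _ u ↦ ⟨u ++ [next u u.2], hnext u u.2⟩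
  let x (i : ℕ) : α := if h : i < s.length then s[i] else next _ (t (i - s.length)).2
  have hxs : initSeg x s.length = s :=
    List.ext_getElem (by simp) fun i _ hi ↦ by simp [x, hi]
  have hxt (n : ℕ) : initSeg x (s.length + n) = (t n).1 := by
    induction n with
    | zero => exact hxs
    | succ n ih => simp [← add_assoc, initSeg_succ, ih, x, t]
  refine ⟨x, hxs, fun n hn ↦ ?_⟩
  obtain ⟨k, rfl⟩ := Nat.exists_eq_add_of_le hn
  rw [hxt]
  exact (t k).2

variable {T : Set (List ℕ)}

theorem IsTree.mem_of_isPrefix (hT : IsTree T) {s t : List ℕ} (hst : s <+: t) (ht : t ∈ T) :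
    s ∈ T :=
  List.prefix_iff_eq_take.1 hst ▸ hT.2 t ht _

theorem IsTree.nil_mem (hT : IsTree T) : [] ∈ T :=
  let ⟨_, ht⟩ := hT.1
  hT.mem_of_isPrefix List.nil_prefix ht

theorem IsTree.mem_treeBody (hT : IsTree T) {x : ℕ → ℕ} {k : ℕ}
    (h : ∀ n, k ≤ n → initSeg x n ∈ T) : x ∈ treeBody T := fun n ↦ by
  have := hT.2 _ (h (max n k) (le_max_right n k)) n
  rwa [take_initSeg, min_eq_left (le_max_left n k)] at this

theorem isClosed_treeBody (T : Set (List ℕ)) : IsClosed (treeBody T) := by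
  have heq : treeBody T = ⋂ n, (fun x (i : Fin n) ↦ x i) ⁻¹' {f | List.ofFn f ∈ T} := by
    ext
    simp [treeBody]
  rw [heq]
  exact isClosed_iInter fun n ↦ (isClosed_discrete _).preimage (by fun_prop)

theorem IsSacksTree.exists_append_mem (hT : IsSacksTree T) {s : List ℕ} (hs : s ∈ T) :
    ∃ a, s ++ [a] ∈ T := by
  obtain ⟨_, -, ⟨r, rfl⟩, a, ha, -⟩ := hT.2 s hs
  cases r with
  | nil => exact ⟨a, by simpa [succs] using ha⟩
  | cons b r => exact ⟨b, hT.1.mem_of_isPrefix ⟨r ++ [a], by simp⟩ ha⟩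

theorem IsSacksTree.exists_mem_treeBody (hT : IsSacksTree T) {s : List ℕ} (hs : s ∈ T) :
    ∃ x ∈ treeBody T, initSeg x s.length = s := by
  obtain ⟨x, hxs, hx⟩ := exists_initSeg_eq_and_forall_mem (fun _ ↦ hT.exists_append_mem) hs
  exact ⟨x, hT.1.mem_treeBody hx, hxs⟩

theorem IsSacksTree.perfect_treeBody (hT : IsSacksTree T) : Perfect (treeBody T) := by
  refine ⟨isClosed_treeBody T, preperfect_iff_nhds.2 fun x hx U hU ↦ ?_⟩
  obtain ⟨n, hnU⟩ : ∃ n, PiNat.cylinder x n ⊆ U := by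
    obtain ⟨_, ⟨y, n, rfl⟩, hxy, hU⟩ :=
      (PiNat.isTopologicalBasis_cylinders _).mem_nhds_iff.1 hU
    exact ⟨n, PiNat.mem_cylinder_iff_eq.1 hxy ▸ hU⟩
  obtain ⟨t, -, (hxt : initSeg x n <+: t), hsucc⟩ := hT.2 _ (hx n)
  obtain ⟨a, ha, hax⟩ := hsucc.exists_ne (x t.length)
  obtain ⟨y, hy, hyt⟩ := hT.exists_mem_treeBody ha
  rw [List.length_append, List.length_singleton, initSeg_succ] at hyt
  obtain ⟨hyt, hya⟩ := List.append_inj' hyt rfl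
  have hyn : initSeg y n = initSeg x n := by
    have hn : n ≤ t.length := by simpa using hxt.length_le
    have htake : initSeg y n = t.take n := by rw [← hyt, take_initSeg, min_eq_left hn]
    rw [htake, List.prefix_iff_eq_take.1 hxt, length_initSeg]
  refine ⟨y, ⟨hnU (initSeg_eq_initSeg_iff.1 hyn), hy⟩, fun hyx ↦ hax ?_⟩
  simpa [hyx] using hya.symm

theorem IsSacksTree.not_countable_treeBody (hT : IsSacksTree T) : ¬ (treeBody T).Countable := by
  let := TopologicalSpace.upgradeIsCompletelyMetrizable (ℕ → ℕ)
  obtain ⟨x, hx, -⟩ := hT.exists_mem_treeBody hT.1.nil_mem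
  obtain ⟨f, hfT, -, hf⟩ := hT.perfect_treeBody.exists_nat_bool_injection ⟨x, hx⟩
  intro hcount
  have hle : 𝔠 ≤ #(range f) := by simp [mk_range_eq f hf]
  exact ((hcount.mono hfT).le_aleph0.trans_lt aleph0_lt_continuum).not_ge hle

/-- The tree of all finite initial segments of the members of `D`, used to turn a perfect set into
a Sacks tree. -/
def treeOf (D : Set (ℕ → ℕ)) : Set (List ℕ) := {s | ∃ x ∈ D, ∃ n, initSeg x n = s}

variable {D : Set (ℕ → ℕ)}

theorem treeOf_subset_iff : treeOf D ⊆ T ↔ D ⊆ treeBody T :=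
  ⟨fun h x hx n ↦ h ⟨x, hx, n, rfl⟩, by rintro h _ ⟨x, hx, n, rfl⟩; exact h hx n⟩

theorem isTree_treeOf (hD : D.Nonempty) : IsTree (treeOf D) := by
  obtain ⟨x, hx⟩ := hD
  refine ⟨⟨_, x, hx, 0, rfl⟩, ?_⟩
  rintro _ ⟨x, hx, n, rfl⟩ m
  exact ⟨x, hx, _, (take_initSeg x m n).symm⟩

theorem isSacksTree_treeOf (hD : Preperfect D) (hne : D.Nonempty) : IsSacksTree (treeOf D) := by
  refine ⟨isTree_treeOf hne, ?_⟩
  rintro _ ⟨x, hx, n, rfl⟩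
  obtain ⟨y, ⟨hyn, hy⟩, hyx⟩ := preperfect_iff_nhds.1 hD x hx _
    ((PiNat.isOpen_cylinder _ x n).mem_nhds (PiNat.self_mem_cylinder x n))
  let m := PiNat.firstDiff y x
  have hnm : n ≤ m := (PiNat.mem_cylinder_iff_le_firstDiff hyx n).1 hyn
  refine ⟨initSeg x m, ⟨x, hx, m, rfl⟩, ?_, x m, ⟨x, hx, m + 1, initSeg_succ x m⟩,
    y m, ⟨y, hy, m + 1, ?_⟩, (PiNat.apply_firstDiff_ne hyx).symm⟩
  · rw [List.prefix_iff_eq_take, length_initSeg, take_initSeg, min_eq_left hnm]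
  · rw [initSeg_succ, initSeg_eq_initSeg_iff.2 (PiNat.mem_cylinder_firstDiff y x)]

theorem treeBody_treeOf (D : Set (ℕ → ℕ)) : treeBody (treeOf D) = closure D := by
  refine (closure_minimal (treeOf_subset_iff.1 subset_rfl) (isClosed_treeBody _)).antisymm' ?_
  intro x hx
  rw [(PiNat.isTopologicalBasis_cylinders _).mem_closure_iff]
  rintro _ ⟨z, n, rfl⟩ hxz
  obtain ⟨y, hy, m, hyx : initSeg y m = initSeg x n⟩ := hx n
  obtain rfl : m = n := by simpa using congrArg List.length hyx
  exact ⟨y, PiNat.mem_cylinder_iff_eq.1 hxz ▸ initSeg_eq_initSeg_iff.1 hyx, hy⟩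

theorem exists_isSacksTree_subset (hD : IsClosed D) (hunc : ¬ D.Countable)
    (hDT : D ⊆ treeBody T) : ∃ Q, IsSacksTree Q ∧ Q ⊆ T ∧ treeBody Q ⊆ D := by
  obtain ⟨E, hE, hne, hED⟩ := exists_perfect_nonempty_of_isClosed_of_not_countable hD hunc
  refine ⟨treeOf E, isSacksTree_treeOf hE.acc hne, treeOf_subset_iff.2 (hED.trans hDT), ?_⟩
  rwa [treeBody_treeOf, hE.closed.closure_eq]

theorem mem_treeIdeal_isSacksTree_of_forall_isClosed {X : Set (ℕ → ℕ)}
    (hX : ∀ P, IsClosed P → ¬ P.Countable → ∃ D ⊆ P, IsClosed D ∧ ¬ D.Countable ∧ Disjoint D X) :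
    X ∈ treeIdeal {T | IsSacksTree T} := by
  intro T hT
  obtain ⟨D, hDT, hD, hunc, hDX⟩ := hX _ (isClosed_treeBody T) hT.not_countable_treeBody
  obtain ⟨Q, hQ, hQT, hQD⟩ := exists_isSacksTree_subset hD hunc hDT
  exact ⟨Q, hQ, hQT, (hDX.mono_left hQD).inter_eq⟩

theorem notMem_treeIdeal_of_forall_inter_nonempty {𝕋 : Set (Set (List ℕ))} (h𝕋 : 𝕋.Nonempty)
    {X : Set (ℕ → ℕ)} (hX : ∀ T ∈ 𝕋, (X ∩ treeBody T).Nonempty) : X ∉ treeIdeal 𝕋 := by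
  intro h
  obtain ⟨P, hP⟩ := h𝕋
  obtain ⟨Q, hQ, -, hQX⟩ := h P hP
  exact (hX Q hQ).ne_empty (inter_comm X _ ▸ hQX)

theorem isCompleteLaverTree_univ : IsCompleteLaverTree univ :=
  ⟨⟨univ_nonempty, fun _ _ _ ↦ mem_univ _⟩, fun _ _ ↦ by simpa [succs] using infinite_univ⟩

end Trees

section Boxes

/-- `F` bounds the search for successors in `T`: a node whose length and entries are controlled by
`b` has an immediate successor with last entry in `[b, F b)`. -/
def IsSuccBound (T : Set (List ℕ)) (F : ℕ → ℕ) : Prop :=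
  ∀ b, ∀ t ∈ T, t.length ≤ b → (∀ a ∈ t, a < b) → (succs T t ∩ Ico b (F b)).Nonempty

variable {T : Set (List ℕ)} {F F' g g' : ℕ → ℕ}

theorem IsSuccBound.mono (hF : IsSuccBound T F) (h : F ≤ F') : IsSuccBound T F' :=
  fun b t ht hlen hlt ↦ (hF b t ht hlen hlt).mono
    (inter_subset_inter_right _ (Ico_subset_Ico_right (h b)))

theorem IsSuccBound.lt_apply (hF : IsSuccBound T F) (hT : [] ∈ T) (b : ℕ) : b < F b := by
  obtain ⟨n, -, hbn, hnF⟩ := hF b [] hT (by simp) (by simp)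
  exact hbn.trans_lt hnF

theorem finite_setOf_length_le_and_forall_lt (b : ℕ) :
    {t : List ℕ | t.length ≤ b ∧ ∀ a ∈ t, a < b}.Finite := by
  refine ((List.finite_length_le (Fin b) b).image (List.map Fin.val)).subset ?_
  rintro t ⟨hlen, hlt⟩
  lift t to List (Fin b) using hlt
  exact ⟨t, by simpa using hlen, rfl⟩

theorem IsCompleteLaverTree.exists_isSuccBound (hT : IsCompleteLaverTree T) :
    ∃ F, IsSuccBound T F := by
  have hbound (b : ℕ) : ∃ N, ∀ t ∈ {t : List ℕ | t.length ≤ b ∧ ∀ a ∈ t, a < b} ∩ T,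
      (succs T t ∩ Ico b N).Nonempty := by
    refine ((Filter.eventually_all_finite
      ((finite_setOf_length_le_and_forall_lt b).inter_of_left T)).2 fun t ht ↦ ?_).exists
        (f := Filter.atTop)
    obtain ⟨n, hn, hbn⟩ := (hT.2 t ht.2).exists_gt b
    filter_upwards [Filter.eventually_gt_atTop n] with N hN
    exact ⟨n, hn, hbn.le, hN⟩
  choose F hF using hbound
  exact ⟨F, fun b t ht hlen hlt ↦ hF b t ⟨⟨hlen, hlt⟩, ht⟩⟩

theorem IsSuccBound.exists_mem_treeBody (hT : IsTree T) (hF : IsSuccBound T F) {b : ℕ → ℕ}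
    (hb : ∀ m, F (b m) ≤ b (m + 1)) : ∃ x ∈ treeBody T, ∀ m, x m ∈ Ico (b m) (F (b m)) := by
  have hmono : StrictMono b :=
    strictMono_nat_of_lt_succ fun m ↦ (hF.lt_apply hT.nil_mem _).trans_le (hb m)
  let A : Set (List ℕ) := {t ∈ T | ∀ m, ∀ h : m < t.length, t[m] ∈ Ico (b m) (F (b m))}
  have hA : ∀ t ∈ A, ∃ a, t ++ [a] ∈ A := by
    rintro t ⟨ht, htb⟩
    have hlt : ∀ a ∈ t, a < b t.length := fun a ha ↦ by
      obtain ⟨m, hm, rfl⟩ := List.getElem_of_mem ha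
      exact (htb m hm).2.trans_le ((hb m).trans (hmono.monotone hm))
    obtain ⟨a, hat, ha⟩ := hF _ t ht (hmono.le_apply) hlt
    refine ⟨a, hat, fun m hm ↦ ?_⟩
    rcases (Nat.lt_succ_iff_lt_or_eq (n := t.length)).1 (by simpa using hm) with h | rfl
    · simpa [List.getElem_append_left h] using htb m h
    · simpa using ha
  obtain ⟨x, -, hx⟩ := exists_initSeg_eq_and_forall_mem hA (s := []) ⟨hT.nil_mem, by simp⟩
  exact ⟨x, fun n ↦ (hx n (Nat.zero_le n)).1,
    fun m ↦ by simpa using (hx (m + 1) (Nat.zero_le _)).2 m (by simp)⟩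

/-- The lower edges of `box F g`: a sequence above `g` that leaves room for two applications of `F`
between consecutive terms. -/
def lowerEdge (F g : ℕ → ℕ) : ℕ → ℕ
  | 0 => g 0
  | m + 1 => max (g (m + 1)) (F (F (lowerEdge F g m)))

/-- The upper edges of `box F g`, which are excluded from its sides. -/
def upperEdge (F g : ℕ → ℕ) (m : ℕ) : ℕ := F (F (lowerEdge F g m))

/-- The compact set of sequences lying between the two edges. It contains a branch of every tree
with successor bound `F`, and boxes for suitably chosen `g` are disjoint. -/
def box (F g : ℕ → ℕ) : Set (ℕ → ℕ) :=
  univ.pi fun m ↦ Ico (lowerEdge F g m) (upperEdge F g m)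

/-- The point of Cantor space recording, for each `m`, in which of the two halves
`[l, F l)` and `[F l, F (F l))` of the `m`-th side of `box F g` the sequence `x` lies. -/
def boxCode (F g x : ℕ → ℕ) (m : ℕ) : Bool := decide (F (lowerEdge F g m) ≤ x m)

theorem le_lowerEdge (F g : ℕ → ℕ) : g ≤ lowerEdge F g
  | 0 => le_rfl
  | _ + 1 => le_max_left _ _

theorem upperEdge_le_lowerEdge_succ (F g : ℕ → ℕ) (m : ℕ) :
    upperEdge F g m ≤ lowerEdge F g (m + 1) :=
  le_max_right _ _

theorem isClosed_box (F g : ℕ → ℕ) : IsClosed (box F g) :=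
  isClosed_set_pi fun _ _ ↦ isClosed_discrete _

theorem continuous_boxCode (F g : ℕ → ℕ) : Continuous (boxCode F g) :=
  continuous_pi fun m ↦ (continuous_of_discreteTopology
    (f := fun k ↦ decide (F (lowerEdge F g m) ≤ k))).comp (continuous_apply m)

theorem disjoint_box_of_not_le (h : ¬ g' ≤ upperEdge F g) : Disjoint (box F g) (box F' g') :=
  disjoint_left.2 fun _ hx hx' ↦ h fun m ↦
    (le_lowerEdge F' g' m).trans ((hx' m trivial).1.trans (hx m trivial).2.le)

theorem IsSuccBound.surjOn_boxCode (hT : IsTree T) (hF : IsSuccBound T F) (g : ℕ → ℕ) :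
    SurjOn (boxCode F g) (box F g ∩ treeBody T) univ := by
  intro z _
  have hlt := hF.lt_apply hT.nil_mem
  let l := lowerEdge F g
  let b (m : ℕ) : ℕ := if z m then F (l m) else l m
  have hlb (m : ℕ) : l m ≤ b m := by
    unfold b
    split
    exacts [(hlt _).le, le_rfl]
  have hFb (m : ℕ) : F (b m) ≤ upperEdge F g m := by
    unfold b
    split
    exacts [le_rfl, (hlt _).le]
  obtain ⟨x, hxT, hx⟩ := hF.exists_mem_treeBody hT
    fun m ↦ (hFb m).trans ((upperEdge_le_lowerEdge_succ F g m).trans (hlb (m + 1)))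
  refine ⟨x, ⟨fun m _ ↦ ⟨(hlb m).trans (hx m).1, (hx m).2.trans_le (hFb m)⟩, hxT⟩, ?_⟩
  funext m
  have hxm := hx m
  cases hz : z m <;> simp_all [boxCode, b, l]

theorem exists_pairwise_disjoint_isClosed_forall_isCompleteLaverTree :
    ∃ (ι : Type) (C : ι → Set (ℕ → ℕ)), (∀ i, IsClosed (C i)) ∧
      Pairwise (Function.onFun Disjoint C) ∧
      ∀ T, IsCompleteLaverTree T → 𝔠 ≤ #{i | 𝔠 ≤ #(C i ∩ treeBody T : Set (ℕ → ℕ))} := by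
  obtain ⟨D, hD, G, hG⟩ := exists_isCofinal_pairwise_not_le upperEdge
  obtain ⟨p, hp, hp_fiber⟩ := exists_continuous_forall_continuum_le_mk_fiber
  let C (i : D × (ℕ → Bool)) : Set (ℕ → ℕ) :=
    box i.1 (G i.1) ∩ boxCode i.1 (G i.1) ⁻¹' (p ⁻¹' {i.2})
  refine ⟨D × (ℕ → Bool), C, fun i ↦ ?_, ?_, fun T hT ↦ ?_⟩
  · exact (isClosed_box _ _).inter
      ((isClosed_singleton.preimage hp).preimage (continuous_boxCode _ _))
  · rintro ⟨d, ξ⟩ ⟨e, η⟩ hne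
    by_cases hde : d = e
    · subst hde
      refine disjoint_left.2 fun x hx hx' ↦ hne ?_
      rw [← show _ = ξ from hx.2, ← show _ = η from hx'.2]
    · refine Disjoint.mono inter_subset_left inter_subset_left ?_
      exact (hG hde).elim disjoint_box_of_not_le fun h ↦ (disjoint_box_of_not_le h).symm
  · obtain ⟨N, hN⟩ := hT.exists_isSuccBound
    obtain ⟨d, hd, hNd⟩ := hD N
    have hlarge (ξ : ℕ → Bool) : 𝔠 ≤ #(C (⟨d, hd⟩, ξ) ∩ treeBody T : Set (ℕ → ℕ)) := by
      have hsub : p ⁻¹' {ξ} ⊆ boxCode d (G ⟨d, hd⟩) '' (C (⟨d, hd⟩, ξ) ∩ treeBody T) := by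
        intro z hz
        obtain ⟨x, ⟨hx, hxT⟩, rfl⟩ := (hN.mono hNd).surjOn_boxCode hT.1 (G ⟨d, hd⟩) (mem_univ z)
        exact ⟨x, ⟨⟨hx, hz⟩, hxT⟩, rfl⟩
      exact (hp_fiber ξ).trans ((mk_le_mk_of_subset hsub).trans mk_image_le)
    have hinj : Function.Injective fun ξ ↦
        (⟨(⟨d, hd⟩, ξ), hlarge ξ⟩ : {i | 𝔠 ≤ #(C i ∩ treeBody T : Set (ℕ → ℕ))}) :=
      fun ξ η h ↦ by simpa using h
    calc 𝔠 = #(ℕ → Bool) := by simp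
      _ ≤ _ := mk_le_of_injective hinj

end Boxes

/-- there is X ⊆ ω^ω with X ∈ s₀ and X ∉ cl₀. -/
theorem stmt2 :
    ∃ X : Set (ℕ → ℕ),
      X ∈ treeIdeal {T | IsSacksTree T} ∧ X ∉ treeIdeal {T | IsCompleteLaverTree T} := by
  obtain ⟨ι, C, hC, hdisj, hCT⟩ := exists_pairwise_disjoint_isClosed_forall_isCompleteLaverTree
  have hcard : #(treeBody '' {T | IsCompleteLaverTree T}) ≤ 𝔠 :=
    mk_image_le.trans ((mk_set_le _).trans (by simp))
  obtain ⟨X, hX, hXclosed⟩ :=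
    exists_forall_inter_nonempty_and_forall_isClosed hC hdisj hcard (forall_mem_image.2 hCT)
  exact ⟨X, mem_treeIdeal_isSacksTree_of_forall_isClosed hXclosed,
    notMem_treeIdeal_of_forall_inter_nonempty ⟨univ, isCompleteLaverTree_univ⟩
      fun _ hT ↦ hX _ (mem_image_of_mem _ hT)⟩
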